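/- arXiv:2008.03871 — 3 statements merged into one kernel-verified Lean document; each statement's English description precedes it below -/
import Mathlib

section
/- Let K ≥ 3 be an integer, let x₁, …, x_K be real numbers with x_k < 0 for every k and |x₁| ≥ |x₂| ≥ ⋯ ≥ |x_K|, and let w = 0. Define k* = min{ k′ ∈ {1, …, K−1} : w + Σ_{k=1}^{k′} x_k < −(K − k′)·|x_{k′}| }, with the convention k* = K if no such k′ exists. Then k* ≤ ⌊K/2⌋ + 1, and hence the number of transmissions saved satisfies K − k* ≥ ⌈K/2⌉ − 1. -/
/-!
If the first `m` statistics all lie at or below `-|x m|`, their sum is at most `-m |x m|`, so the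
running sum is below the threshold `-(K - m) |x m|` as soon as `w < (2 m - K) |x m|`. For
`m = ⌊K/2⌋ + 1` the factor `2 m - K` is at least `1`, hence `w < |x m|` suffices.
-/

theorem le_neg_abs_of_antitoneOn_abs {ι G : Type*} [Preorder ι] [AddCommGroup G] [LinearOrder G]
    [IsOrderedAddMonoid G] {f : ι → G} {s : Set ι} {m : ι} (hf : AntitoneOn (fun i ↦ |f i|) s)
    (hnonpos : ∀ i ∈ s, f i ≤ 0) (hm : IsGreatest s m) : ∀ i ∈ s, f i ≤ -|f m| := by
  intro i hi
  have habs : |f m| ≤ -f i := (hf hi hm.1 (hm.2 hi)).trans_eq (abs_of_nonpos (hnonpos i hi))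
  exact le_neg_of_le_neg habs

theorem le_neg_abs_of_abs_add_one_le {G : Type*} [AddCommGroup G] [LinearOrder G]
    [IsOrderedAddMonoid G] {f : ℕ → G} {l m : ℕ}
    (hf : ∀ k, l ≤ k → k < m → |f (k + 1)| ≤ |f k|) (hnonpos : ∀ k ∈ Set.Icc l m, f k ≤ 0) :
    ∀ k ∈ Set.Icc l m, f k ≤ -|f m| := by
  intro k hk
  have hanti : AntitoneOn (fun i ↦ |f i|) (Set.Icc l m) :=
    antitoneOn_of_add_one_le Set.ordConnected_Icc fun i _ hi hi' ↦ hf i hi.1 hi'.2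
  exact le_neg_abs_of_antitoneOn_abs hanti hnonpos (isGreatest_Icc (hk.1.trans hk.2)) k hk

section OrderedCusum

variable {𝕜 : Type*} [Ring 𝕜] [LinearOrder 𝕜]

/-- The indices in `{1, …, K - 1}` at which the ordered-CUSUM rule, started from the previous
CUSUM value `w`, allows transmissions to halt. -/
def haltingIndices (K : ℕ) (x : ℕ → 𝕜) (w : 𝕜) : Set ℕ :=
  {k' | 1 ≤ k' ∧ k' ≤ K - 1 ∧
    w + ∑ k ∈ Finset.Icc 1 k', x k < -((K : 𝕜) - (k' : 𝕜)) * |x k'|}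

/-- `IsTransmissionCount K x w n` says that the ordered-CUSUM rule makes exactly `n` transmissions,
i.e. `n = k*`. It is the first halting index, or `K` if there is none; the two cases are kept
apart because `sInf ∅ = 0`. -/
structure IsTransmissionCount (K : ℕ) (x : ℕ → 𝕜) (w : 𝕜) (n : ℕ) : Prop where
  eq_sInf : (haltingIndices K x w).Nonempty → n = sInf (haltingIndices K x w)
  eq_of_not_nonempty : ¬(haltingIndices K x w).Nonempty → n = K

variable {K m n : ℕ} {x : ℕ → 𝕜} {w : 𝕜}

namespace IsTransmissionCount

theorem le_of_mem_haltingIndices (hn : IsTransmissionCount K x w n)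
    (hm : m ∈ haltingIndices K x w) : n ≤ m :=
  (hn.eq_sInf ⟨m, hm⟩).trans_le (Nat.sInf_le hm)

theorem le (hn : IsTransmissionCount K x w n) : n ≤ K := by
  by_cases hne : (haltingIndices K x w).Nonempty
  · obtain ⟨m, hm⟩ := hne
    exact (hn.le_of_mem_haltingIndices hm).trans (hm.2.1.trans (Nat.sub_le K 1))
  · exact (hn.eq_of_not_nonempty hne).le

end IsTransmissionCount

variable [IsStrictOrderedRing 𝕜]

theorem add_sum_Icc_lt_of_le_neg_abs (hx : ∀ k ∈ Set.Icc 1 m, x k ≤ -|x m|)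
    (hw : w < (2 * m - K) * |x m|) :
    w + ∑ k ∈ Finset.Icc 1 m, x k < -((K : 𝕜) - (m : 𝕜)) * |x m| := by
  have hsum : ∑ k ∈ Finset.Icc 1 m, x k ≤ m * -|x m| := by
    simpa only [Nat.card_Icc, Nat.add_sub_cancel, nsmul_eq_mul] using
      Finset.sum_le_card_nsmul (Finset.Icc 1 m) x _ fun k hk ↦ hx k (Finset.mem_Icc.mp hk)
  calc w + ∑ k ∈ Finset.Icc 1 m, x k
      < (2 * m - K) * |x m| + m * -|x m| := add_lt_add_of_lt_of_le hw hsum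
    _ = -((K : 𝕜) - (m : 𝕜)) * |x m| := by noncomm_ring

theorem IsTransmissionCount.le_of_le_neg_abs (hn : IsTransmissionCount K x w n) (hm : 1 ≤ m)
    (hx : ∀ k ∈ Set.Icc 1 m, x k ≤ -|x m|) (hw : w < (2 * m - K) * |x m|) : n ≤ m := by
  rcases lt_or_ge m K with hmK | hKm
  · exact hn.le_of_mem_haltingIndices
      ⟨hm, Nat.le_sub_one_of_lt hmK, add_sum_Icc_lt_of_le_neg_abs hx hw⟩
  · exact hn.le.trans hKm

theorem stmt_6_general (hn : IsTransmissionCount K x w n)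
    (hx : ∀ k ∈ Set.Icc 1 (K / 2 + 1), x k ≤ -|x (K / 2 + 1)|)
    (hw : w < |x (K / 2 + 1)|) :
    n ≤ K / 2 + 1 ∧ (K + 1) / 2 - 1 ≤ K - n := by
  have hfactor : (1 : 𝕜) ≤ 2 * (K / 2 + 1 : ℕ) - K := by
    have hK : 1 + K ≤ 2 * (K / 2 + 1) := by omega
    exact le_sub_iff_add_le.mpr (mod_cast hK)
  have hle : n ≤ K / 2 + 1 :=
    hn.le_of_le_neg_abs (Nat.le_add_left 1 _) hx
      (hw.trans_le (le_mul_of_one_le_left (abs_nonneg _) hfactor))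
  exact ⟨hle, by omega⟩

end OrderedCusum

/-- under the ordered-CUSUM stopping rule with previous CUSUM value
`w = 0` and all clique statistics negative, the number of transmissions made
satisfies `k* ≤ ⌊K/2⌋ + 1`, hence `K - k* ≥ ⌈K/2⌉ - 1`. -/
theorem stmt_6 (K : ℕ) (hK : 3 ≤ K) (x : ℕ → ℝ)
    (hneg : ∀ k, 1 ≤ k → k ≤ K → x k < 0)
    (hord : ∀ k, 1 ≤ k → k < K → |x (k + 1)| ≤ |x k|)
    (w : ℝ) (hw : w = 0)
    (kstar : ℕ)
    (hne : ({k' | 1 ≤ k' ∧ k' ≤ K - 1 ∧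
        w + ∑ k ∈ Finset.Icc 1 k', x k < -((K : ℝ) - (k' : ℝ)) * |x k'|} : Set ℕ).Nonempty →
      kstar = sInf {k' | 1 ≤ k' ∧ k' ≤ K - 1 ∧
        w + ∑ k ∈ Finset.Icc 1 k', x k < -((K : ℝ) - (k' : ℝ)) * |x k'|})
    (hemp : ¬({k' | 1 ≤ k' ∧ k' ≤ K - 1 ∧
        w + ∑ k ∈ Finset.Icc 1 k', x k < -((K : ℝ) - (k' : ℝ)) * |x k'|} : Set ℕ).Nonempty →
      kstar = K) :
    kstar ≤ K / 2 + 1 ∧ (K + 1) / 2 - 1 ≤ K - kstar := by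
  have hK2 : K / 2 + 1 ≤ K := by omega
  exact stmt_6_general ⟨hne, hemp⟩
    (le_neg_abs_of_abs_add_one_le (fun k hk hkm ↦ hord k hk (hkm.trans_le hK2))
      fun k hk ↦ (hneg k hk.1 (hk.2.trans hK2)).le)
    (hw ▸ abs_pos_of_neg (hneg _ (Nat.le_add_left 1 _) hK2))
end

section
/- Let K ≥ 2 be an integer and let (Ω, 𝔽, P) be a probability space. Let W : Ω → ℝ be a random variable with W ≥ 0 everywhere, let L₁, …, L_K : Ω → ℝ be random variables, and let L̂₁, …, L̂_K : Ω → ℝ be random variables such that for every ω ∈ Ω, (L̂₁(ω), …, L̂_K(ω)) is a permutation (rearrangement) of (L₁(ω), …, L_K(ω)) satisfying |L̂₁(ω)| ≥ |L̂₂(ω)| ≥ ⋯ ≥ |L̂_K(ω)|. Define the random variable k* : Ω → {1,…,K} by k*(ω) = min{ k′ ∈ {1,…,K−1} : W(ω) + Σ_{k=1}^{k′} L̂_k(ω) < −(K − k′)·|L̂_{k′}(ω)| }, with k*(ω) = K if no such k′ exists (assume k* is measurable). Then the average number of transmissions saved satisfies E[K − k*] ≥ (⌈K/2⌉ − 1)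 · P( W = 0 and L_k < 0 for all k = 1, …, K ). -/
open MeasureTheory
open scoped ProbabilityTheory

/-!
If `w ≤ 0` and `x₁, …, x_K` are negative with decreasing absolute values, then after `m`
transmissions the running sum is at most `-m |x_m|`. This lies strictly below `-(K - m) |x_m|` as
soon as `K < 2 m`, so at most `m = ⌊K/2⌋ + 1` transmissions are made and at least
`K - m = ⌈K/2⌉ - 1` are saved. Since the number of saved transmissions is never negative,
integrating this bound over the event, as in Markov's inequality, gives the claim.
-/

namespace OrderedCusum

/-- The slots `k' < K` at which the ordered-CUSUM rule may halt, for the previous CUSUM value `w`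
and the statistics `x 1, …, x K` listed in their order of transmission (`x 0` is never read). -/
def haltingSet (K : ℕ) (w : ℝ) (x : ℕ → ℝ) : Set ℕ :=
  {k' | 1 ≤ k' ∧ k' ≤ K - 1 ∧ w + ∑ k ∈ Finset.Icc 1 k', x k < -((K : ℝ) - (k' : ℝ)) * |x k'|}

open Classical in
/-- The number `k*` of transmissions made under the ordered-CUSUM rule: the first halting slot, or
`K` if the rule never halts early. -/
noncomputable def numTransmissions (K : ℕ) (w : ℝ) (x : ℕ → ℝ) : ℕ :=
  if (haltingSet K w x).Nonempty then sInf (haltingSet K w x) else K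

variable {K m : ℕ} {w : ℝ} {x : ℕ → ℝ}

lemma eq_numTransmissions (hne : (haltingSet K w x).Nonempty → m = sInf (haltingSet K w x))
    (hemp : ¬(haltingSet K w x).Nonempty → m = K) : m = numTransmissions K w x := by
  unfold numTransmissions
  split_ifs with h
  exacts [hne h, hemp h]

lemma numTransmissions_le_of_mem (hm : m ∈ haltingSet K w x) : numTransmissions K w x ≤ m := by
  rw [numTransmissions, if_pos ⟨m, hm⟩]
  exact Nat.sInf_le hm

lemma numTransmissions_le : numTransmissions K w x ≤ K := by
  by_cases h : (haltingSet K w x).Nonempty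
  · obtain ⟨m, hm⟩ := h
    exact (numTransmissions_le_of_mem hm).trans (hm.2.1.trans (Nat.sub_le K 1))
  · exact (if_neg h).le

lemma sum_Icc_le_neg_mul_abs (hx : ∀ k ∈ Set.Icc 1 m, x k ≤ 0)
    (hanti : AntitoneOn (fun k => |x k|) (Set.Icc 1 m)) :
    ∑ k ∈ Finset.Icc 1 m, x k ≤ -(m * |x m|) := by
  have hterm : ∀ k ∈ Finset.Icc 1 m, x k ≤ -|x m| := fun k hk => by
    have hk' : k ∈ Set.Icc 1 m := Finset.mem_Icc.1 hk
    have habs : |x m| ≤ |x k| := hanti hk' ⟨hk'.1.trans hk'.2, le_rfl⟩ hk'.2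
    rwa [abs_of_nonpos (hx k hk'), le_neg] at habs
  simpa using Finset.sum_le_card_nsmul _ _ _ hterm

lemma mem_haltingSet_of_neg (hmK : m < K) (hKm : K < 2 * m) (hw : w ≤ 0)
    (hx : ∀ k ∈ Set.Icc 1 m, x k < 0) (hanti : AntitoneOn (fun k => |x k|) (Set.Icc 1 m)) :
    m ∈ haltingSet K w x := by
  have hm : 1 ≤ m := by lia
  refine ⟨hm, Nat.le_sub_one_of_lt hmK, ?_⟩
  have hpos : 0 < |x m| := abs_pos.2 (hx m ⟨hm, le_rfl⟩).ne
  have hcast : (K : ℝ) - m < m := by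
    have : (K : ℝ) < 2 * m := mod_cast hKm
    linarith
  calc w + ∑ k ∈ Finset.Icc 1 m, x k
      ≤ 0 + -(m * |x m|) := add_le_add hw (sum_Icc_le_neg_mul_abs (fun k hk => (hx k hk).le) hanti)
    _ = -(m * |x m|) := zero_add _
    _ < -((K - m) * |x m|) := neg_lt_neg (mul_lt_mul_of_pos_right hcast hpos)
    _ = -((K : ℝ) - m) * |x m| := (neg_mul _ _).symm

lemma numTransmissions_le_half_add_one (hw : w ≤ 0) (hx : ∀ k ∈ Set.Icc 1 K, x k < 0)
    (hanti : AntitoneOn (fun k => |x k|) (Set.Icc 1 K)) :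
    numTransmissions K w x ≤ K / 2 + 1 := by
  -- The rule never halts at `K` itself, so `K ≤ 2` is not covered by `mem_haltingSet_of_neg`.
  rcases lt_or_ge (K / 2 + 1) K with hlt | hge
  · have hsub : Set.Icc 1 (K / 2 + 1) ⊆ Set.Icc 1 K := Set.Icc_subset_Icc_right hlt.le
    exact numTransmissions_le_of_mem <|
      mem_haltingSet_of_neg hlt (by lia) hw (fun k hk => hx k (hsub hk)) (hanti.mono hsub)
  · exact numTransmissions_le.trans hge

lemma ceil_half_sub_one_le_sub_numTransmissions (hw : w ≤ 0) (hx : ∀ k ∈ Set.Icc 1 K, x k < 0)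
    (hanti : AntitoneOn (fun k => |x k|) (Set.Icc 1 K)) :
    (((K + 1) / 2 : ℕ) : ℝ) - 1 ≤ K - numTransmissions K w x := by
  have hle := numTransmissions_le_half_add_one hw hx hanti
  have hnat : (K + 1) / 2 + numTransmissions K w x ≤ K + 1 := by lia
  rw [sub_le_sub_iff]
  exact_mod_cast hnat

end OrderedCusum

lemma mul_measureReal_le_integral_of_forall_mem_le {Ω : Type*} [MeasurableSpace Ω] {μ : Measure Ω}
    {f : Ω → ℝ} {s : Set Ω} {c : ℝ} (hf : 0 ≤ᵐ[μ] f) (hint : Integrable f μ)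
    (hs : ∀ ω ∈ s, c ≤ f ω) : c * μ.real s ≤ ∫ ω, f ω ∂μ := by
  rcases le_or_gt c 0 with hc | hc
  · exact (mul_nonpos_of_nonpos_of_nonneg hc measureReal_nonneg).trans (integral_nonneg_of_ae hf)
  · have hfin : μ {ω | c ≤ f ω} ≠ ⊤ := (hint.measure_ge_lt_top hc).ne
    calc c * μ.real s
        ≤ c * μ.real {ω | c ≤ f ω} := mul_le_mul_of_nonneg_left (measureReal_mono hs hfin) hc.le
      _ ≤ ∫ ω, f ω ∂μ := mul_meas_ge_le_integral_of_nonneg hf hint c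

open OrderedCusum in
theorem stmt_8_general (K : ℕ) {Ω : Type*} [MeasurableSpace Ω] {μ : Measure Ω} [IsFiniteMeasure μ]
    (W : Ω → ℝ) (L Lhat : ℕ → Ω → ℝ)
    (hperm : ∀ ω, ∃ σ : Equiv.Perm ℕ,
      (∀ k ∈ Finset.Icc 1 K, σ k ∈ Finset.Icc 1 K) ∧
      ∀ k ∈ Finset.Icc 1 K, Lhat k ω = L (σ k) ω)
    (hord : ∀ ω, ∀ k, 1 ≤ k → k < K → |Lhat (k + 1) ω| ≤ |Lhat k ω|)
    (kstar : Ω → ℕ) (hkmeas : AEMeasurable kstar μ)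
    (hkstar : ∀ ω, kstar ω = numTransmissions K (W ω) (fun k => Lhat k ω)) :
    ((((K + 1) / 2 : ℕ) : ℝ) - 1) * μ.real {ω | W ω ≤ 0 ∧ ∀ k, 1 ≤ k → k ≤ K → L k ω < 0} ≤
      ∫ ω, ((K : ℝ) - kstar ω) ∂μ := by
  have hle : ∀ ω, (kstar ω : ℝ) ≤ K := fun ω =>
    Nat.cast_le.2 ((hkstar ω).trans_le numTransmissions_le)
  have hint : Integrable (fun ω => (kstar ω : ℝ)) μ :=
    .of_mem_Icc 0 K (measurable_from_top.comp_aemeasurable hkmeas)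
      (ae_of_all _ fun ω => ⟨Nat.cast_nonneg _, hle ω⟩)
  refine mul_measureReal_le_integral_of_forall_mem_le (ae_of_all _ fun ω => sub_nonneg.2 (hle ω))
    ((integrable_const _).sub hint) ?_
  rintro ω ⟨hW, hL⟩
  have hneg : ∀ k ∈ Set.Icc 1 K, Lhat k ω < 0 := fun k hk => by
    obtain ⟨σ, hσ, hLσ⟩ := hperm ω
    have hσk := Finset.mem_Icc.1 (hσ k (Finset.mem_Icc.2 hk))
    exact (hLσ k (Finset.mem_Icc.2 hk)).trans_lt (hL _ hσk.1 hσk.2)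
  have hanti : AntitoneOn (fun k => |Lhat k ω|) (Set.Icc 1 K) :=
    antitoneOn_of_succ_le Set.ordConnected_Icc fun k _ hk hk' => hord ω k hk.1 hk'.2
  rw [hkstar ω]
  exact ceil_half_sub_one_le_sub_numTransmissions hW hneg hanti

/-- Theorem 2 of the paper: the average number of transmissions saved
by the ordered-CUSUM stopping rule satisfies
`E[K - k*] ≥ (⌈K/2⌉ - 1) · P(W = 0 and Lₖ < 0 for all k)`. -/
theorem stmt_8 (K : ℕ) (hK : 2 ≤ K)
    {Ω : Type*} [MeasureSpace Ω] [IsProbabilityMeasure (ℙ : Measure Ω)]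
    (W : Ω → ℝ) (hW : ∀ ω, 0 ≤ W ω)
    (L Lhat : ℕ → Ω → ℝ)
    (hperm : ∀ ω, ∃ σ : Equiv.Perm ℕ,
      (∀ k ∈ Finset.Icc 1 K, σ k ∈ Finset.Icc 1 K) ∧
      ∀ k ∈ Finset.Icc 1 K, Lhat k ω = L (σ k) ω)
    (hord : ∀ ω, ∀ k, 1 ≤ k → k < K → |Lhat (k + 1) ω| ≤ |Lhat k ω|)
    (kstar : Ω → ℕ) (hkmeas : Measurable kstar)
    (hne : ∀ ω, ({k' | 1 ≤ k' ∧ k' ≤ K - 1 ∧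
        W ω + ∑ k ∈ Finset.Icc 1 k', Lhat k ω <
          -((K : ℝ) - (k' : ℝ)) * |Lhat k' ω|} : Set ℕ).Nonempty →
      kstar ω = sInf {k' | 1 ≤ k' ∧ k' ≤ K - 1 ∧
        W ω + ∑ k ∈ Finset.Icc 1 k', Lhat k ω <
          -((K : ℝ) - (k' : ℝ)) * |Lhat k' ω|})
    (hemp : ∀ ω, ¬({k' | 1 ≤ k' ∧ k' ≤ K - 1 ∧
        W ω + ∑ k ∈ Finset.Icc 1 k', Lhat k ω <
          -((K : ℝ) - (k' : ℝ)) * |Lhat k' ω|} : Set ℕ).Nonempty →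
      kstar ω = K) :
    ((((K + 1) / 2 : ℕ) : ℝ) - 1) *
        ((ℙ : Measure Ω) {ω | W ω = 0 ∧ ∀ k, 1 ≤ k → k ≤ K → L k ω < 0}).toReal ≤
      ∫ ω : Ω, ((K : ℝ) - (kstar ω : ℝ)) ∂(ℙ : Measure Ω) := by
  simpa only [(hW _).ge_iff_eq', measureReal_def] using stmt_8_general K W L Lhat hperm hord
    kstar hkmeas.aemeasurable fun ω => OrderedCusum.eq_numTransmissions (hne ω) (hemp ω)
end

section
/- Let K ≥ 3 and τ ≥ 1 be integers and, for each time slot i with 1 ≤ i ≤ τ − 1, let ℓ_{i,1}, …, ℓ_{i,K} be real numbers with ℓ_{i,k} < 0 for all k, and let ℓ̂_{i,1}, …, ℓ̂_{i,K} be a permutation of them with |ℓ̂_{i,1}| ≥ ⋯ ≥ |ℓ̂_{i,K}|. Define W₀ = 0, W_i = max{0, W_{i−1} + Σ_{k=1}^{K} ℓ_{i,k}}, and for each slot i define k*_i = min{ k′ ∈ {1,…,K−1} : W_{i−1} + Σ_{k=1}^{k′} ℓ̂_{i,k} < −(K − k′)·|ℓ̂_{i,k′}| }, with k*_i = K if no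 such k′ exists. Then for every i = 1, …, τ − 1 one has W_{i−1} = 0 and K − k*_i ≥ ⌈K/2⌉ − 1, and consequently the total number of transmissions saved satisfies Σ_{i=1}^{τ−1} (K − k*_i) ≥ (⌈K/2⌉ − 1)(τ − 1). -/
/-!
Before the change all statistics are negative, so the CUSUM statistic is reset to `0` in every slot.
Once `m` ordered statistics have been received, each of them is at most `-|x m|`, so their sum is at
most `-m |x m|`. This beats the threshold `-(K - m) |x m|` as soon as `m > K / 2`, hence at most
`⌊K / 2⌋ + 1` transmissions are made, and `K - (⌊K / 2⌋ + 1) = ⌈K / 2⌉ - 1`.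
-/

open Finset

namespace OrderedCUSUM

theorem cusum_eq_zero_of_nonpos {M : Type*} [AddZeroClass M] [LinearOrder M] {W y : ℕ → M} {n : ℕ}
    (hW0 : W 0 = 0) (hW : ∀ i < n, W (i + 1) = max 0 (W i + y (i + 1)))
    (hy : ∀ i < n, y (i + 1) ≤ 0) : W n = 0 := by
  induction n with
  | zero => exact hW0
  | succ n ih =>
    have hWn : W n = 0 :=
      ih (fun i hi => hW i (hi.trans n.lt_succ_self)) (fun i hi => hy i (hi.trans n.lt_succ_self))
    rw [hW n n.lt_succ_self, hWn, zero_add, max_eq_left (hy n n.lt_succ_self)]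

variable {R : Type*} [Ring R] [LinearOrder R] {K m : ℕ} {w : R} {x : ℕ → R}

/-- The numbers of transmissions, short of all `K`, at which the ordered-CUSUM rule allows a slot to
stop. Here `w` is the CUSUM statistic at the start of the slot and `x 1, …, x K` are the clique
statistics in order of transmission. -/
def stoppingSet (K : ℕ) (w : R) (x : ℕ → R) : Set ℕ :=
  {m | 1 ≤ m ∧ m ≤ K - 1 ∧ w + ∑ k ∈ Icc 1 m, x k < -((K : R) - (m : R)) * |x m|}

open Classical in
/-- The number `k*` of transmissions made in a slot under the ordered-CUSUM rule: the first
admissible stopping point, or `K` if there is none. -/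
noncomputable def transmissionCount (K : ℕ) (w : R) (x : ℕ → R) : ℕ :=
  if (stoppingSet K w x).Nonempty then sInf (stoppingSet K w x) else K

theorem eq_transmissionCount {k : ℕ}
    (hne : (stoppingSet K w x).Nonempty → k = sInf (stoppingSet K w x))
    (hemp : ¬(stoppingSet K w x).Nonempty → k = K) : k = transmissionCount K w x := by
  rw [transmissionCount]
  split_ifs with h
  exacts [hne h, hemp h]

theorem transmissionCount_le_of_mem (hm : m ∈ stoppingSet K w x) : transmissionCount K w x ≤ m := by
  rw [transmissionCount, if_pos ⟨m, hm⟩]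
  exact Nat.sInf_le hm

variable [IsStrictOrderedRing R]

theorem mem_stoppingSet_of_lt_two_mul (hw : w ≤ 0) (hneg : ∀ k ∈ Set.Icc 1 m, x k < 0)
    (hmin : ∀ k ∈ Set.Icc 1 m, |x m| ≤ |x k|) (hmK : m < K) (hKm : K < 2 * m) :
    m ∈ stoppingSet K w x := by
  have hm : 1 ≤ m := by omega
  have hxm : 0 < |x m| := abs_pos.2 (hneg m ⟨hm, le_rfl⟩).ne
  have hterm : ∀ k ∈ Icc 1 m, x k ≤ -|x m| := fun k hk => by
    have hk' := Finset.mem_Icc.1 hk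
    exact le_neg_of_le_neg (abs_of_neg (hneg k hk') ▸ hmin k hk')
  have hcoeff : (K : R) - m < m := by
    rw [sub_lt_iff_lt_add, ← two_mul]
    exact_mod_cast hKm
  refine ⟨hm, Nat.le_sub_one_of_lt hmK, ?_⟩
  calc w + ∑ k ∈ Icc 1 m, x k
      ≤ ∑ k ∈ Icc 1 m, x k := add_le_of_nonpos_left hw
    _ ≤ #(Icc 1 m) • -|x m| := sum_le_card_nsmul _ _ _ hterm
    _ = -(m * |x m|) := by rw [Nat.card_Icc, Nat.add_sub_cancel, nsmul_eq_mul, mul_neg]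
    _ < -((K - m) * |x m|) := neg_lt_neg (mul_lt_mul_of_pos_right hcoeff hxm)
    _ = -((K : R) - m) * |x m| := (neg_mul _ _).symm

theorem half_sub_one_le_sub_transmissionCount (hw : w ≤ 0) (hneg : ∀ k ∈ Set.Icc 1 K, x k < 0)
    (hanti : AntitoneOn (fun k => |x k|) (Set.Icc 1 K)) :
    (K + 1) / 2 - 1 ≤ K - transmissionCount K w x := by
  obtain hK | hK := lt_or_ge K 3
  · omega
  · have hmem : K / 2 + 1 ∈ stoppingSet K w x := by
      have hsub : Set.Icc 1 (K / 2 + 1) ⊆ Set.Icc 1 K := Set.Icc_subset_Icc_right (by omega)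
      refine mem_stoppingSet_of_lt_two_mul hw (fun k hk => hneg k (hsub hk)) (fun k hk => ?_)
        (by omega) (by omega)
      exact hanti (hsub hk) (hsub ⟨by omega, le_rfl⟩) hk.2
    have := transmissionCount_le_of_mem hmem
    omega

end OrderedCUSUM

open OrderedCUSUM

theorem stmt_10_general {R : Type*} [Ring R] [LinearOrder R] [IsStrictOrderedRing R] (K n : ℕ)
    (ℓ ℓhat : ℕ → ℕ → R)
    (hneg : ∀ i k, 1 ≤ i → i ≤ n → 1 ≤ k → k ≤ K → ℓ i k < 0)
    (hperm : ∀ i, 1 ≤ i → i ≤ n → ∃ σ : Equiv.Perm ℕ,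
      (∀ k ∈ Icc 1 K, σ k ∈ Icc 1 K) ∧ ∀ k ∈ Icc 1 K, ℓhat i k = ℓ i (σ k))
    (hord : ∀ i k, 1 ≤ i → i ≤ n → 1 ≤ k → k < K → |ℓhat i (k + 1)| ≤ |ℓhat i k|)
    (W : ℕ → R) (hW0 : W 0 = 0)
    (hW : ∀ i, 1 ≤ i → W i = max 0 (W (i - 1) + ∑ k ∈ Icc 1 K, ℓ i k)) :
    (∀ i, 1 ≤ i → i ≤ n →
      W (i - 1) = 0 ∧ (K + 1) / 2 - 1 ≤ K - transmissionCount K (W (i - 1)) (ℓhat i)) ∧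
    ((K + 1) / 2 - 1) * n ≤
      ∑ i ∈ Icc 1 n, (K - transmissionCount K (W (i - 1)) (ℓhat i)) := by
  have hslot : ∀ i, 1 ≤ i → i ≤ n →
      W (i - 1) = 0 ∧ (K + 1) / 2 - 1 ≤ K - transmissionCount K (W (i - 1)) (ℓhat i) := by
    intro i hi hin
    have hWi : W (i - 1) = 0 :=
      cusum_eq_zero_of_nonpos (y := fun j => ∑ k ∈ Icc 1 K, ℓ j k) hW0
        (fun j _ => hW (j + 1) j.succ_pos)
        fun j hj => sum_nonpos fun k hk =>
          (hneg (j + 1) k j.succ_pos (by omega) (mem_Icc.1 hk).1 (mem_Icc.1 hk).2).le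
    have hhat_neg : ∀ k ∈ Set.Icc 1 K, ℓhat i k < 0 := by
      intro k hk
      obtain ⟨σ, hσ, hℓhat⟩ := hperm i hi hin
      have hσk := mem_Icc.1 (hσ k (mem_Icc.2 hk))
      exact hℓhat k (mem_Icc.2 hk) ▸ hneg i (σ k) hi hin hσk.1 hσk.2
    have hhat_anti : AntitoneOn (fun k => |ℓhat i k|) (Set.Icc 1 K) :=
      antitoneOn_of_add_one_le Set.ordConnected_Icc fun k _ hk hk' => hord i k hi hin hk.1 hk'.2
    exact ⟨hWi, half_sub_one_le_sub_transmissionCount hWi.le hhat_neg hhat_anti⟩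
  refine ⟨hslot, ?_⟩
  calc ((K + 1) / 2 - 1) * n
      = #(Icc 1 n) • ((K + 1) / 2 - 1) := by
        rw [Nat.card_Icc, Nat.add_sub_cancel, smul_eq_mul, mul_comm]
    _ ≤ ∑ i ∈ Icc 1 n, (K - transmissionCount K (W (i - 1)) (ℓhat i)) :=
        card_nsmul_le_sum _ _ _ fun i hi => (hslot i (mem_Icc.1 hi).1 (mem_Icc.1 hi).2).2

/-- deterministic core of Theorem 3 of the paper: before the change
time `τ`, the CUSUM statistic is `0` at the start of every slot, every slot saves at
least `⌈K/2⌉ - 1` transmissions, and hence the total number of transmissions saved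
over slots `1, …, τ-1` is at least `(⌈K/2⌉ - 1)(τ - 1)`. -/
theorem stmt_10 (K : ℕ) (hK : 3 ≤ K) (τ : ℕ) (hτ : 1 ≤ τ)
    (ℓ ℓhat : ℕ → ℕ → ℝ)
    (hneg : ∀ i k, 1 ≤ i → i ≤ τ - 1 → 1 ≤ k → k ≤ K → ℓ i k < 0)
    (hperm : ∀ i, 1 ≤ i → i ≤ τ - 1 → ∃ σ : Equiv.Perm ℕ,
      (∀ k ∈ Finset.Icc 1 K, σ k ∈ Finset.Icc 1 K) ∧
      ∀ k ∈ Finset.Icc 1 K, ℓhat i k = ℓ i (σ k))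
    (hord : ∀ i k, 1 ≤ i → i ≤ τ - 1 → 1 ≤ k → k < K →
      |ℓhat i (k + 1)| ≤ |ℓhat i k|)
    (W : ℕ → ℝ) (hW0 : W 0 = 0)
    (hW : ∀ i, 1 ≤ i → W i = max 0 (W (i - 1) + ∑ k ∈ Finset.Icc 1 K, ℓ i k))
    (kstar : ℕ → ℕ)
    (hne : ∀ i, ({k' | 1 ≤ k' ∧ k' ≤ K - 1 ∧
        W (i - 1) + ∑ k ∈ Finset.Icc 1 k', ℓhat i k <
          -((K : ℝ) - (k' : ℝ)) * |ℓhat i k'|} : Set ℕ).Nonempty →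
      kstar i = sInf {k' | 1 ≤ k' ∧ k' ≤ K - 1 ∧
        W (i - 1) + ∑ k ∈ Finset.Icc 1 k', ℓhat i k <
          -((K : ℝ) - (k' : ℝ)) * |ℓhat i k'|})
    (hemp : ∀ i, ¬({k' | 1 ≤ k' ∧ k' ≤ K - 1 ∧
        W (i - 1) + ∑ k ∈ Finset.Icc 1 k', ℓhat i k <
          -((K : ℝ) - (k' : ℝ)) * |ℓhat i k'|} : Set ℕ).Nonempty →
      kstar i = K) :
    (∀ i, 1 ≤ i → i ≤ τ - 1 →
      W (i - 1) = 0 ∧ (K + 1) / 2 - 1 ≤ K - kstar i) ∧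
    ((K + 1) / 2 - 1) * (τ - 1) ≤ ∑ i ∈ Finset.Icc 1 (τ - 1), (K - kstar i) := by
  obtain rfl : kstar = fun i => transmissionCount K (W (i - 1)) (ℓhat i) :=
    funext fun i => eq_transmissionCount (hne i) (hemp i)
  exact stmt_10_general K (τ - 1) ℓ ℓhat hneg hperm hord W hW0 hW
end
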